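/- Fix reals a > b > 0, set T = log(a/b), and fix β with 0 < β < T·(a−b)/2; set γ = √(β² + a·b·T²) and η(a,b,β) = a + b + β − 2γ/T + (β/T)·log((γ+β)/(γ−β)). For each integer n ≥ 3, let Z₁, …, Z_{⌈n/2⌉} be i.i.d. Bernoulli with success probability min(1, b·log n/n) and W₁, …, W_{⌈n/2⌉} be i.i.d. Bernoulli with success probability min(1, a·log n/n), all mutually independent. Then for every ε > 0 there exists N such that for all n ≥ N, P( Σ_{k=1}^{⌈n/2⌉} (Z_k − W_k) ≥ (β/T)·log n + 1 + log n / log log n ) ≥ n^{−η(a,b,β)/2 − ε}. -/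

import Mathlib

open MeasureTheory ProbabilityTheory Filter

/-- `⌈n/2⌉`. -/
noncomputable def half (n : ℕ) : ℕ := ⌈(n : ℝ) / 2⌉₊

open InformationTheory (klFun)
open scoped Topology unitInterval Nat

/-!
The sums of the `Z k` and of the `W k` are independent binomials with means close to
`(b / 2) * log n` and `(a / 2) * log n`. A lower bound only needs one point of the joint
distribution: the first sum equal to about `α₁ * log n` and the second to about `α₂ * log n`, where
`α₁ - α₂ = β / T`. By Stirling's formula this point has probability
`n ^ (-(poissonRate (b / 2) α₁ + poissonRate (a / 2) α₂) + o(1))`. The Lagrange condition for the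
cheapest such point is `α₁ * α₂ = a * b / 4`, so that `α₁ = (γ + β) / (2 * T)` and
`α₂ = (γ - β) / (2 * T)`, and the exponent there is `-η / 2`.
-/

/-- The large deviation rate function of the Poisson distribution with mean `μ`: a Poisson variable
of mean `μ * L` takes the value `x * L` with probability `exp (-(poissonRate μ x + o(1)) * L)`. -/
noncomputable def poissonRate (μ x : ℝ) : ℝ := μ * klFun (x / μ)

lemma poissonRate_eq {μ x : ℝ} (hμ : μ ≠ 0) :
    poissonRate μ x = x * Real.log (x / μ) + μ - x := by
  rw [poissonRate, InformationTheory.klFun_apply]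
  field_simp

lemma poissonRate_div_div {c : ℝ} (hc : c ≠ 0) (μ x : ℝ) :
    poissonRate (μ / c) (x / c) = poissonRate μ x / c := by
  rw [poissonRate, poissonRate, div_div_div_cancel_right₀ hc, div_mul_eq_mul_div]

lemma tendsto_poissonRate {ι : Type*} {l : Filter ι} {u v : ι → ℝ} {μ x : ℝ} (hμ : μ ≠ 0)
    (hu : Tendsto u l (𝓝 μ)) (hv : Tendsto v l (𝓝 x)) :
    Tendsto (fun n ↦ poissonRate (u n) (v n)) l (𝓝 (poissonRate μ x)) :=
  hu.mul (InformationTheory.continuous_klFun.continuousAt.tendsto.comp (hv.div hu hμ))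

lemma poissonRate_add_poissonRate {μ ν x y : ℝ} (hμ : 0 < μ) (hν : 0 < ν) (hx : 0 < x)
    (hy : 0 < y) (hxy : x * y = μ * ν) :
    poissonRate μ x + poissonRate ν y =
      μ + ν - (x + y) + (x - y) / 2 * (Real.log (x / y) + Real.log (ν / μ)) := by
  have hlog : Real.log x + Real.log y = Real.log μ + Real.log ν := by
    rw [← Real.log_mul hx.ne' hy.ne', hxy, Real.log_mul hμ.ne' hν.ne']
  rw [poissonRate_eq hμ.ne', poissonRate_eq hν.ne', Real.log_div hx.ne' hμ.ne',
    Real.log_div hy.ne' hν.ne', Real.log_div hx.ne' hy.ne', Real.log_div hν.ne' hμ.ne']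
  linear_combination (x + y) / 2 * hlog

lemma poissonRate_add_poissonRate_saddlePoint {a b β γ T : ℝ} (ha : 0 < a) (hb : 0 < b)
    (hT : 0 < T) (hTab : T = Real.log (a / b)) (hβγ : |β| < γ)
    (hγ : γ ^ 2 = β ^ 2 + a * b * T ^ 2) :
    poissonRate (b / 2) ((γ + β) / (2 * T)) + poissonRate (a / 2) ((γ - β) / (2 * T)) =
      (a + b + β - 2 * γ / T + β / T * Real.log ((γ + β) / (γ - β))) / 2 := by
  obtain ⟨hβneg, hβpos⟩ := abs_lt.1 hβγ
  rw [poissonRate_add_poissonRate (by positivity) (by positivity)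
      (div_pos (by linarith) (by positivity)) (div_pos (by linarith) (by positivity))
      (by field_simp; linarith),
    div_div_div_cancel_right₀ (by positivity), div_div_div_cancel_right₀ two_ne_zero, ← hTab]
  field_simp
  ring

lemma log_factorial_le {n : ℕ} (hn : n ≠ 0) :
    Real.log n ! ≤ n * Real.log n - n + 1 + Real.log n / 2 := by
  obtain ⟨k, rfl⟩ := Nat.exists_eq_succ_of_ne_zero hn
  have hone : Real.log (Stirling.stirlingSeq 1) = 1 - Real.log 2 / 2 := by
    rw [Stirling.stirlingSeq_one, Real.log_div (by positivity) (by positivity), Real.log_exp,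
      Real.log_sqrt zero_le_two]
  have hanti : Real.log (Stirling.stirlingSeq k.succ) ≤ Real.log (Stirling.stirlingSeq 1) :=
    Real.log_le_log (Stirling.stirlingSeq'_pos k) (Stirling.stirlingSeq'_antitone k.zero_le)
  rw [hone, Stirling.log_stirlingSeq_formula, Real.log_mul two_ne_zero (by positivity),
    Real.log_div (by positivity) (Real.exp_ne_zero 1), Real.log_exp] at hanti
  linarith

lemma exp_neg_poissonRate_le_binomial {m i : ℕ} {p : I} (hi : i ≠ 0) (him : i < m) (hp0 : 0 < p)
    (hp1 : p < 1) :
    Real.exp (-(poissonRate ((m - i) * p) i + (m - i) * p * (p / (1 - p))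
      + Real.log i / 2 + 1)) ≤ Bin(m, p).real {i} := by
  have hp0' : (0 : ℝ) < p := hp0
  have hq : (0 : ℝ) < 1 - p := sub_pos.2 hp1
  have hi0 : (0 : ℝ) < i := by positivity
  have hmi : (0 : ℝ) < m - i := sub_pos.2 (by exact_mod_cast him)
  have hchoose : ((m : ℝ) - i) ^ i / i ! ≤ m.choose i := by
    refine le_trans ?_ (Nat.pow_le_choose i m)
    gcongr
    rw [Nat.cast_sub (by omega)]
    push_cast
    linarith
  have hlogq : -(p + p * (p / (1 - p)) : ℝ) ≤ Real.log (1 - p) := by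
    convert Real.one_sub_inv_le_log_of_pos hq using 1
    field_simp
    ring
  calc Real.exp (-(poissonRate ((m - i) * p) i + (m - i) * p * (p / (1 - p))
          + Real.log i / 2 + 1))
      ≤ Real.exp (i * Real.log ((m - i) * p) - Real.log i !
          + (m - i : ℕ) * Real.log (1 - p)) := by
        rw [poissonRate_eq (by positivity), Real.log_div hi0.ne' (by positivity),
          Nat.cast_sub him.le]
        gcongr
        linarith [log_factorial_le hi, mul_le_mul_of_nonneg_left hlogq hmi.le]
    _ = ((m - i) * p) ^ i / i ! * (1 - p) ^ (m - i) := by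
        rw [Real.exp_add, Real.exp_sub, Real.exp_nat_mul, Real.exp_nat_mul, Real.exp_log hq,
          Real.exp_log (by positivity), Real.exp_log (by positivity)]
    _ = (m - i) ^ i / i ! * p ^ i * (1 - p) ^ (m - i) := by rw [mul_pow]; ring
    _ ≤ m.choose i * p ^ i * (1 - p) ^ (m - i) := by gcongr
    _ = Bin(m, p).real {i} := (binomial_real_singleton m i p).symm

lemma tendsto_log_div_self : Tendsto (fun x ↦ Real.log x / x) atTop (𝓝 0) :=
  Real.isLittleO_log_id_atTop.tendsto_div_nhds_zero

section Asymptotics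

variable {ι : Type*} {l : Filter ι} {L u : ι → ℝ} {c : ℝ}

lemma tendsto_atTop_of_tendsto_div (hL : Tendsto L l atTop) (hc : 0 < c)
    (hu : Tendsto (fun n ↦ u n / L n) l (𝓝 c)) : Tendsto u l atTop := by
  refine (hu.pos_mul_atTop hc hL).congr' ?_
  filter_upwards [hL.eventually_ne_atTop 0] with n hn using div_mul_cancel₀ _ hn

lemma tendsto_comp_div_of_tendsto_div {f : ℝ → ℝ} {d : ℝ}
    (hf : Tendsto (fun x ↦ f x / x) atTop (𝓝 d)) (hL : Tendsto L l atTop) (hc : 0 < c)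
    (hu : Tendsto (fun n ↦ u n / L n) l (𝓝 c)) :
    Tendsto (fun n ↦ f (u n) / L n) l (𝓝 (d * c)) := by
  have hu' := tendsto_atTop_of_tendsto_div hL hc hu
  refine ((hf.comp hu').mul hu).congr' ?_
  filter_upwards [hu'.eventually_ne_atTop 0] with n hn using div_mul_div_cancel₀ hn

lemma eventually_exp_neg_mul_le_binomial {m i : ι → ℕ} {p : ι → I} {μ α r : ℝ}
    (hL : Tendsto L l atTop) (hp : Tendsto p l (𝓝 0)) (hμ : 0 < μ) (hα : 0 < α)
    (hm : Tendsto (fun n ↦ m n * (p n : ℝ) / L n) l (𝓝 μ))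
    (hi : Tendsto (fun n ↦ i n / L n) l (𝓝 α)) (hr : poissonRate μ α < r) :
    ∀ᶠ n in l, Real.exp (-(r * L n)) ≤ Bin(m n, p n).real {i n} := by
  have hp' : Tendsto (fun n ↦ (p n : ℝ)) l (𝓝 0) := (continuous_subtype_val.tendsto 0).comp hp
  have hodds : Tendsto (fun n ↦ (p n : ℝ) / (1 - p n)) l (𝓝 0) := by
    simpa only [sub_zero, zero_div, Pi.div_def] using hp'.div (hp'.const_sub 1) (by norm_num)
  have hmean : Tendsto (fun n ↦ (m n - i n) * (p n : ℝ) / L n) l (𝓝 μ) := by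
    convert hm.sub (hi.mul hp') using 2 with n
    · ring
    · ring
  have hlog : Tendsto (fun n ↦ Real.log (i n) / L n) l (𝓝 0) := by
    simpa using tendsto_comp_div_of_tendsto_div tendsto_log_div_self hL hα hi
  have hexponent : Tendsto (fun n ↦ (poissonRate ((m n - i n) * p n) (i n)
      + (m n - i n) * p n * (p n / (1 - p n)) + Real.log (i n) / 2 + 1) / L n) l
      (𝓝 (poissonRate μ α)) := by
    have h := (((tendsto_poissonRate hμ.ne' hmean hi).add (hmean.mul hodds)).add
      (hlog.div_const 2)).add hL.inv_tendsto_atTop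
    simp only [mul_zero, zero_div, add_zero] at h
    refine h.congr' ?_
    filter_upwards [hL.eventually_ne_atTop 0] with n hn
    rw [poissonRate_div_div hn, Pi.inv_apply]
    ring
  filter_upwards [hexponent.eventually_lt_const hr, hL.eventually_gt_atTop 0,
    hp.eventually_lt_const one_pos, hmean.eventually_const_lt hμ, hi.eventually_const_lt hα]
    with n hlt hLn hp1 hmean0 hi0
  have hmeanpos : 0 < (m n - i n) * (p n : ℝ) := (div_pos_iff_of_pos_right hLn).1 hmean0
  have hipos : (0 : ℝ) < i n := (div_pos_iff_of_pos_right hLn).1 hi0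
  have him : (0 : ℝ) < m n - i n := pos_of_mul_pos_left hmeanpos (p n).2.1
  have hp0 : (0 : ℝ) < p n := pos_of_mul_pos_right hmeanpos him.le
  refine le_trans ?_ (exp_neg_poissonRate_le_binomial (by exact_mod_cast hipos.ne')
    (by exact_mod_cast sub_pos.1 him) hp0 hp1)
  rw [Real.exp_le_exp, neg_le_neg_iff]
  exact ((div_lt_iff₀ hLn).1 hlt).le

end Asymptotics

section BernoulliSums

variable {Ω ι κ : Type*} {mΩ : MeasurableSpace Ω} {P : Measure Ω}

lemma hasLaw_bernoulliMeasure_of_measure_eq [IsProbabilityMeasure P] {X : Ω → ℝ} {p : I}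
    (hX : AEMeasurable X P) (h₁ : P {ω | X ω = 1} = ENNReal.ofReal p)
    (h₀ : P {ω | X ω = 0} = 1 - ENNReal.ofReal p) :
    HasLaw X Ber(1, 0, p) P where
  map_eq := by
    have hnull (x : ℝ) : NullMeasurableSet {ω | X ω = x} P :=
      hX.nullMeasurableSet_preimage (measurableSet_singleton x)
    have hdisj : Disjoint {ω | X ω = 1} {ω | X ω = 0} :=
      Set.disjoint_left.2 fun ω h h' ↦ one_ne_zero (h.symm.trans h')
    have hae : ∀ᵐ ω ∂P, X ω = 1 ∨ X ω = 0 := by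
      refine (mem_ae_iff_prob_eq_one₀ ((hnull 1).union (hnull 0))).2 ?_
      rw [measure_union₀ (hnull 0) hdisj.aedisjoint, h₁, h₀,
        add_tsub_cancel_of_le (ENNReal.ofReal_le_one.2 p.2.2)]
    have hp : ENNReal.ofReal p = unitInterval.toNNReal p := ENNReal.ofReal_eq_coe_nnreal p.2.1
    have hσp : 1 - ENNReal.ofReal p = unitInterval.toNNReal (σ p) := by
      rw [← ENNReal.ofReal_one, ← ENNReal.ofReal_sub _ p.2.1]
      exact ENNReal.ofReal_eq_coe_nnreal (σ p).2.1
    rw [(Measure.ae_eq_or_eq_iff_map_eq_dirac_add_dirac hX one_ne_zero).1 hae]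
    exact congrArg₂ (fun c d ↦ c • Measure.dirac 1 + d • Measure.dirac 0) (h₁.trans hp)
      (h₀.trans hσp)

lemma map_ncard_setBernoulli_univ [Fintype ι] (p : I) :
    (setBernoulli (Set.univ : Set ι) p).map Set.ncard = binomial (Fintype.card ι) p := by
  have := Measure.isProbabilityMeasure_map (μ := setBernoulli (Set.univ : Set ι) p)
    (f := Set.ncard) (by fun_prop)
  refine Measure.ext_of_measureReal_singleton fun k ↦ ?_
  rw [map_ncard_setBernoulli_real_singleton Set.finite_univ, binomial_real_singleton]
  simp [Set.ncard_univ]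

open Classical in
lemma measurable_indicator_mem (i : ι) :
    Measurable fun s : Set ι ↦ if i ∈ s then (1 : ℝ) else 0 :=
  Measurable.ite (measurableSet_setOfPred.2 (by fun_prop)) (by fun_prop) (by fun_prop)

open Classical in
lemma map_indicator_setBernoulli_univ (p : I) :
    (setBernoulli (Set.univ : Set ι) p).map (fun s i ↦ if i ∈ s then (1 : ℝ) else 0) =
      Measure.infinitePi fun _ ↦ Ber(1, 0, p) := by
  have hBer : Ber(True, False, p).map (fun q ↦ if q then (1 : ℝ) else 0) = Ber(1, 0, p) := by
    simp
  have hpi := Measure.infinitePi_map_pi (μ := fun _ : ι ↦ Ber(True, False, p))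
    (f := fun _ q ↦ if q then (1 : ℝ) else 0) (by fun_prop)
  simp_rw [hBer] at hpi
  rw [setBernoulli_eq_map,
    Measure.map_map (measurable_pi_iff.2 measurable_indicator_mem) (by fun_prop), ← hpi]
  simp only [Set.mem_univ]
  rfl

open Classical in
lemma hasLaw_sum_binomial [Fintype ι] {X : ι → Ω → ℝ} {p : I}
    (hX : ∀ i, HasLaw (X i) Ber(1, 0, p) P) (hindep : iIndepFun X P) :
    HasLaw (fun ω ↦ ∑ i, X i ω) Bin(ℝ, Fintype.card ι, p) P := by
  refine HasLaw.comp (Y := fun x : ι → ℝ ↦ ∑ i, x i) ⟨by fun_prop, ?_⟩ (hindep.hasLaw_pi hX)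
  rw [← Measure.infinitePi_eq_pi, ← map_indicator_setBernoulli_univ,
    Measure.map_map (by fun_prop) (measurable_pi_iff.2 measurable_indicator_mem),
    ← map_ncard_setBernoulli_univ, Measure.map_map (by fun_prop) (by fun_prop)]
  congr 1
  ext s
  simp [Set.ncard_eq_toFinset_card']

lemma hasLaw_sum_binomial_of_measure_eq [Fintype ι] {X : ι → Ω → ℝ} {p : I}
    (hX : ∀ i, AEMeasurable (X i) P) (hindep : iIndepFun X P)
    (h : ∀ i, P {ω | X i ω = 1} = ENNReal.ofReal p ∧ P {ω | X i ω = 0} = 1 - ENNReal.ofReal p) :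
    HasLaw (fun ω ↦ ∑ i, X i ω) Bin(ℝ, Fintype.card ι, p) P :=
  have := hindep.isProbabilityMeasure
  hasLaw_sum_binomial (fun i ↦ hasLaw_bernoulliMeasure_of_measure_eq (hX i) (h i).1 (h i).2) hindep

lemma indepFun_sum_of_iIndepFun_sumElim {M : Type*} [AddCommMonoid M] [MeasurableSpace M]
    [MeasurableAdd₂ M] [Fintype ι] [Fintype κ] {X : ι → Ω → M} {Y : κ → Ω → M}
    (hX : ∀ i, AEMeasurable (X i) P) (hY : ∀ j, AEMeasurable (Y j) P)
    (h : iIndepFun (Sum.elim X Y) P) :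
    IndepFun (fun ω ↦ ∑ i, X i ω) (fun ω ↦ ∑ j, Y j ω) P := by
  have hblocks := h.indepFun_finset₀ (Finset.univ.map .inl) (Finset.univ.map .inr)
    (by simp [Finset.disjoint_left]) (by simpa [Sum.forall] using ⟨hX, hY⟩)
  have hsum (s : Finset (ι ⊕ κ)) : Measurable fun x : s → M ↦ ∑ i, x i := by fun_prop
  convert hblocks.comp (hsum _) (hsum _) using 1
  · ext ω
    simpa using ((Finset.univ.map .inl).sum_coe_sort fun i ↦ Sum.elim X Y i ω).symm
  · ext ω
    simpa using ((Finset.univ.map .inr).sum_coe_sort fun i ↦ Sum.elim X Y i ω).symm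

lemma measureReal_preimage_natCast_of_hasLaw {X : Ω → ℝ} {m : ℕ} {p : I}
    (hX : HasLaw X Bin(ℝ, m, p) P) (i : ℕ) :
    P.real (X ⁻¹' {(i : ℝ)}) = Bin(m, p).real {i} := by
  rw [binomial_real_singleton, ← map_cast_binomial_real_singleton (R := ℝ)]
  exact hX.measureReal_eq (measurableSet_singleton (i : ℝ))

lemma binomial_mul_binomial_le_measureReal_le_sub {X Y : Ω → ℝ} {m k i j : ℕ} {p q : I} {t : ℝ}
    (hX : HasLaw X Bin(ℝ, m, p) P) (hY : HasLaw Y Bin(ℝ, k, q) P) (hXY : IndepFun X Y P)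
    (ht : t ≤ (i : ℝ) - j) :
    Bin(m, p).real {i} * Bin(k, q).real {j} ≤ P.real {ω | t ≤ X ω - Y ω} := by
  have := hX.isProbabilityMeasure
  calc Bin(m, p).real {i} * Bin(k, q).real {j}
      = P.real (X ⁻¹' {(i : ℝ)} ∩ Y ⁻¹' {(j : ℝ)}) := by
        rw [measureReal_def P,
          hXY.measure_inter_preimage_eq_mul _ _ (measurableSet_singleton _)
            (measurableSet_singleton _), ENNReal.toReal_mul, ← measureReal_def, ← measureReal_def,
          measureReal_preimage_natCast_of_hasLaw hX, measureReal_preimage_natCast_of_hasLaw hY]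
    _ ≤ P.real {ω | t ≤ X ω - Y ω} :=
        measureReal_mono fun ω ⟨hXi, hYj⟩ ↦ by
          rwa [Set.mem_ofPred_eq, hXi, hYj]

end BernoulliSums

lemma eventually_exp_neg_mul_le_measureReal_le_sub {ι : Type*} {l : Filter ι} {L t : ι → ℝ}
    {m k : ι → ℕ} {p q : ι → I} {μ ν α₁ α₂ r : ℝ} {Ω : ι → Type*}
    {mΩ : ∀ n, MeasurableSpace (Ω n)} {P : ∀ n, Measure (Ω n)} {X Y : ∀ n, Ω n → ℝ}
    (hX : ∀ᶠ n in l, HasLaw (X n) Bin(ℝ, m n, p n) (P n))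
    (hY : ∀ᶠ n in l, HasLaw (Y n) Bin(ℝ, k n, q n) (P n))
    (hXY : ∀ᶠ n in l, IndepFun (X n) (Y n) (P n))
    (hL : Tendsto L l atTop) (hp : Tendsto p l (𝓝 0)) (hq : Tendsto q l (𝓝 0))
    (hμ : 0 < μ) (hν : 0 < ν) (hα₁ : 0 < α₁) (hα₂ : 0 < α₂)
    (hm : Tendsto (fun n ↦ m n * (p n : ℝ) / L n) l (𝓝 μ))
    (hk : Tendsto (fun n ↦ k n * (q n : ℝ) / L n) l (𝓝 ν))
    (ht : Tendsto (fun n ↦ t n / L n) l (𝓝 (α₁ - α₂)))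
    (hr : poissonRate μ α₁ + poissonRate ν α₂ < r) :
    ∀ᶠ n in l, Real.exp (-(r * L n)) ≤ (P n).real {ω | t n ≤ X n ω - Y n ω} := by
  obtain ⟨r₁, hr₁, hr₁r⟩ := exists_between (lt_sub_iff_add_lt.2 hr)
  have hα₁L : Tendsto (fun n ↦ (α₂ * L n + t n) / L n) l (𝓝 α₁) := by
    rw [← add_sub_cancel α₂ α₁]
    refine (ht.const_add α₂).congr' ?_
    filter_upwards [hL.eventually_ne_atTop 0] with n hn
    rw [add_div, mul_div_cancel_right₀ _ hn]
  have hi : Tendsto (fun n ↦ (⌈α₂ * L n + t n⌉₊ : ℝ) / L n) l (𝓝 α₁) := by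
    simpa using tendsto_comp_div_of_tendsto_div tendsto_nat_ceil_div_atTop hL hα₁ hα₁L
  have hj : Tendsto (fun n ↦ (⌊α₂ * L n⌋₊ : ℝ) / L n) l (𝓝 α₂) :=
    (tendsto_nat_floor_mul_div_atTop hα₂.le).comp hL
  filter_upwards [hX, hY, hXY, hL.eventually_gt_atTop 0,
    eventually_exp_neg_mul_le_binomial hL hp hμ hα₁ hm hi hr₁,
    eventually_exp_neg_mul_le_binomial hL hq hν hα₂ hk hj (lt_sub_comm.1 hr₁r)]
    with n hX hY hXY hLn hbinX hbinY
  have hceil := Nat.le_ceil (α₂ * L n + t n)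
  have hfloor := Nat.floor_le (mul_pos hα₂ hLn).le
  calc Real.exp (-(r * L n)) = Real.exp (-(r₁ * L n)) * Real.exp (-((r - r₁) * L n)) := by
        rw [← Real.exp_add]; ring_nf
    _ ≤ Bin(m n, p n).real {⌈α₂ * L n + t n⌉₊} * Bin(k n, q n).real {⌊α₂ * L n⌋₊} := by gcongr
    _ ≤ (P n).real {ω | t n ≤ X n ω - Y n ω} :=
        binomial_mul_binomial_le_measureReal_le_sub hX hY hXY (by linarith)

/-- The connection probability `c log n / n`, truncated to the unit interval. -/
noncomputable def edgeProb (c : ℝ) (n : ℕ) : I :=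
  Set.projIcc 0 1 zero_le_one (c * Real.log n / n)

lemma coe_edgeProb {c : ℝ} (hc : 0 ≤ c) (n : ℕ) :
    (edgeProb c n : ℝ) = min 1 (c * Real.log n / n) := by
  rw [edgeProb, Set.coe_projIcc, max_eq_right]
  have := Real.log_natCast_nonneg n
  positivity

lemma tendsto_mul_log_natCast_div (c : ℝ) :
    Tendsto (fun n : ℕ ↦ c * Real.log n / n) atTop (𝓝 0) := by
  simpa [mul_div_assoc] using
    (tendsto_log_div_self.comp tendsto_natCast_atTop_atTop).const_mul c

lemma tendsto_edgeProb (c : ℝ) : Tendsto (edgeProb c) atTop (𝓝 0) := by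
  have h := (continuous_projIcc (h := zero_le_one (α := ℝ))).tendsto 0
  rw [Set.projIcc_left] at h
  exact h.comp (tendsto_mul_log_natCast_div c)

lemma tendsto_half_div : Tendsto (fun n : ℕ ↦ (half n : ℝ) / n) atTop (𝓝 (1 / 2)) := by
  have h := (tendsto_nat_ceil_mul_div_atTop (by norm_num : (0 : ℝ) ≤ 1 / 2)).comp
    tendsto_natCast_atTop_atTop
  refine h.congr fun n ↦ ?_
  simp [half, div_eq_inv_mul]

lemma tendsto_log_natCast_atTop : Tendsto (fun n : ℕ ↦ Real.log n) atTop atTop :=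
  Real.tendsto_log_atTop.comp tendsto_natCast_atTop_atTop

lemma tendsto_half_mul_edgeProb_div_log {c : ℝ} (hc : 0 ≤ c) :
    Tendsto (fun n ↦ half n * (edgeProb c n : ℝ) / Real.log n) atTop (𝓝 (c / 2)) := by
  have h := tendsto_half_div.mul_const c
  rw [one_div_mul_eq_div] at h
  refine h.congr' ?_
  filter_upwards [(tendsto_mul_log_natCast_div c).eventually_le_const one_pos,
    tendsto_log_natCast_atTop.eventually_ne_atTop 0] with n hn hlog
  rw [coe_edgeProb hc, min_eq_right hn]
  field_simp

lemma tendsto_threshold_div_log (c : ℝ) :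
    Tendsto (fun n : ℕ ↦ (c * Real.log n + 1 + Real.log n / Real.log (Real.log n)) / Real.log n)
      atTop (𝓝 c) := by
  have hlog := tendsto_log_natCast_atTop
  have hloglog := Real.tendsto_log_atTop.comp hlog
  have h := (hlog.inv_tendsto_atTop.add hloglog.inv_tendsto_atTop).const_add c
  rw [add_zero, add_zero] at h
  refine h.congr' ?_
  filter_upwards [hlog.eventually_ne_atTop 0] with n hn
  simp only [Pi.inv_apply, Function.comp_apply]
  field_simp
  ring

lemma eventually_rpow_neg_le_measureReal_le_sum_sub {a b α₁ α₂ r : ℝ} {t : ℕ → ℝ}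
    {Ω : ℕ → Type*} {mΩ : ∀ n, MeasurableSpace (Ω n)} {P : ∀ n, Measure (Ω n)}
    {Z W : ∀ n, Fin (half n) → Ω n → ℝ}
    (hmZ : ∀ n k, AEMeasurable (Z n k) (P n)) (hmW : ∀ n k, AEMeasurable (W n k) (P n))
    (hindep : ∀ᶠ n in atTop, iIndepFun (Sum.elim (Z n) (W n)) (P n))
    (hZ : ∀ᶠ n in atTop, ∀ k, P n {ω | Z n k ω = 1} = ENNReal.ofReal (edgeProb b n) ∧
      P n {ω | Z n k ω = 0} = 1 - ENNReal.ofReal (edgeProb b n))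
    (hW : ∀ᶠ n in atTop, ∀ k, P n {ω | W n k ω = 1} = ENNReal.ofReal (edgeProb a n) ∧
      P n {ω | W n k ω = 0} = 1 - ENNReal.ofReal (edgeProb a n))
    (ha : 0 < a) (hb : 0 < b) (hα₁ : 0 < α₁) (hα₂ : 0 < α₂)
    (ht : Tendsto (fun n ↦ t n / Real.log n) atTop (𝓝 (α₁ - α₂)))
    (hr : poissonRate (b / 2) α₁ + poissonRate (a / 2) α₂ < r) :
    ∀ᶠ n : ℕ in atTop,
      (n : ℝ) ^ (-r) ≤ (P n).real {ω | t n ≤ ∑ k, (Z n k ω - W n k ω)} := by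
  have hlawZ : ∀ᶠ n in atTop,
      HasLaw (fun ω ↦ ∑ k, Z n k ω) Bin(ℝ, half n, edgeProb b n) (P n) := by
    filter_upwards [hindep, hZ] with n hn hZn
    simpa only [Fintype.card_fin] using hasLaw_sum_binomial_of_measure_eq (hmZ n)
      (iIndepFun.precomp (g := Sum.inl) Sum.inl_injective hn) hZn
  have hlawW : ∀ᶠ n in atTop,
      HasLaw (fun ω ↦ ∑ k, W n k ω) Bin(ℝ, half n, edgeProb a n) (P n) := by
    filter_upwards [hindep, hW] with n hn hWn
    simpa only [Fintype.card_fin] using hasLaw_sum_binomial_of_measure_eq (hmW n)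
      (iIndepFun.precomp (g := Sum.inr) Sum.inr_injective hn) hWn
  have hsums : ∀ᶠ n in atTop,
      IndepFun (fun ω ↦ ∑ k, Z n k ω) (fun ω ↦ ∑ k, W n k ω) (P n) :=
    hindep.mono fun n ↦ indepFun_sum_of_iIndepFun_sumElim (hmZ n) (hmW n)
  filter_upwards [eventually_gt_atTop 0, eventually_exp_neg_mul_le_measureReal_le_sub
    hlawZ hlawW hsums tendsto_log_natCast_atTop (tendsto_edgeProb b) (tendsto_edgeProb a)
    (half_pos hb) (half_pos ha) hα₁ hα₂ (tendsto_half_mul_edgeProb_div_log hb.le)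
    (tendsto_half_mul_edgeProb_div_log ha.le) ht hr] with n hn hlower
  simp_rw [Finset.sum_sub_distrib]
  rwa [Real.rpow_def_of_pos (by positivity), mul_neg, mul_comm]

theorem sbm_llr_lower_bound_noisy_side_info_general
    (a b : ℝ) (hb : 0 < b) (hab : b < a) (β : ℝ)
    (Ω : ℕ → Type*) (mΩ : ∀ n, MeasurableSpace (Ω n)) (P : ∀ n, Measure (Ω n))
    (Z W : ∀ n, Fin (half n) → Ω n → ℝ)
    (hmZ : ∀ n k, AEMeasurable (Z n k) (P n)) (hmW : ∀ n k, AEMeasurable (W n k) (P n))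
    (hindep : ∀ n, 3 ≤ n →
      iIndepFun (Sum.elim (Z n) (W n)) (P n))
    (hZ : ∀ n, 3 ≤ n → ∀ k,
      P n {ω | Z n k ω = 1} = ENNReal.ofReal (min 1 (b * Real.log n / n)) ∧
      P n {ω | Z n k ω = 0} = 1 - ENNReal.ofReal (min 1 (b * Real.log n / n)))
    (hW : ∀ n, 3 ≤ n → ∀ k,
      P n {ω | W n k ω = 1} = ENNReal.ofReal (min 1 (a * Real.log n / n)) ∧
      P n {ω | W n k ω = 0} = 1 - ENNReal.ofReal (min 1 (a * Real.log n / n))) :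
    let T : ℝ := Real.log (a / b)
    let γ : ℝ := Real.sqrt (β ^ 2 + a * b * T ^ 2)
    let η : ℝ := a + b + β - 2 * γ / T + (β / T) * Real.log ((γ + β) / (γ - β))
    ∀ ε > (0 : ℝ), ∀ᶠ n : ℕ in atTop,
      (n : ℝ) ^ (-η / 2 - ε)
        ≤ (P n).real {ω | (β / T) * Real.log n + 1 + Real.log n / Real.log (Real.log n)
            ≤ ∑ k, (Z n k ω - W n k ω)} := by
  intro T γ η ε hε
  have ha : 0 < a := hb.trans hab
  have hT : 0 < T := Real.log_pos ((one_lt_div hb).2 hab)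
  have hβγ : |β| < γ := by
    rw [← Real.sqrt_sq_eq_abs]
    exact Real.sqrt_lt_sqrt (sq_nonneg β) (lt_add_of_pos_right _ (by positivity))
  have hα₁ : 0 < (γ + β) / (2 * T) := div_pos (by linarith [neg_lt_of_abs_lt hβγ]) (by positivity)
  have hα₂ : 0 < (γ - β) / (2 * T) := div_pos (by linarith [lt_of_abs_lt hβγ]) (by positivity)
  have hgap : β / T = (γ + β) / (2 * T) - (γ - β) / (2 * T) := by
    field_simp
    ring
  have hrate :=
    poissonRate_add_poissonRate_saddlePoint ha hb hT rfl hβγ (Real.sq_sqrt (by positivity))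
  rw [neg_div, ← neg_add']
  refine eventually_rpow_neg_le_measureReal_le_sum_sub hmZ hmW (eventually_atTop.2 ⟨3, hindep⟩)
    (eventually_atTop.2 ⟨3, ?_⟩) (eventually_atTop.2 ⟨3, ?_⟩) ha hb hα₁ hα₂
    (hgap ▸ tendsto_threshold_div_log (β / T)) (by linarith)
  · simpa only [coe_edgeProb hb.le] using hZ
  · simpa only [coe_edgeProb ha.le] using hW

theorem sbm_llr_lower_bound_noisy_side_info
    (a b : ℝ) (hb : 0 < b) (hab : b < a)
    (β : ℝ) (hβ : 0 < β) (hβ2 : β < Real.log (a / b) * (a - b) / 2)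
    (Ω : ℕ → Type*) (mΩ : ∀ n, MeasurableSpace (Ω n))
    (P : ∀ n, Measure (Ω n)) (hP : ∀ n, IsProbabilityMeasure (P n))
    (Z W : ∀ n, Fin (half n) → Ω n → ℝ)
    (hmZ : ∀ n k, Measurable (Z n k)) (hmW : ∀ n k, Measurable (W n k))
    (hindep : ∀ n, 3 ≤ n →
      iIndepFun (Sum.elim (Z n) (W n)) (P n))
    (hZ : ∀ n, 3 ≤ n → ∀ k,
      P n {ω | Z n k ω = 1} = ENNReal.ofReal (min 1 (b * Real.log n / n)) ∧
      P n {ω | Z n k ω = 0} = 1 - ENNReal.ofReal (min 1 (b * Real.log n / n)))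
    (hW : ∀ n, 3 ≤ n → ∀ k,
      P n {ω | W n k ω = 1} = ENNReal.ofReal (min 1 (a * Real.log n / n)) ∧
      P n {ω | W n k ω = 0} = 1 - ENNReal.ofReal (min 1 (a * Real.log n / n))) :
    let T : ℝ := Real.log (a / b)
    let γ : ℝ := Real.sqrt (β ^ 2 + a * b * T ^ 2)
    let η : ℝ := a + b + β - 2 * γ / T + (β / T) * Real.log ((γ + β) / (γ - β))
    ∀ ε > (0 : ℝ), ∃ N : ℕ, ∀ n ≥ N,
      (n : ℝ) ^ (-η / 2 - ε)
        ≤ (P n {ω | (β / T) * Real.log n + 1 + Real.log n / Real.log (Real.log n)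
            ≤ ∑ k, (Z n k ω - W n k ω)}).toReal :=
  fun ε hε ↦ eventually_atTop.1 <|
    sbm_llr_lower_bound_noisy_side_info_general a b hb hab β Ω mΩ P Z W
      (fun n k ↦ (hmZ n k).aemeasurable) (fun n k ↦ (hmW n k).aemeasurable) hindep hZ hW ε hε
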